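/- (Lemma L1.) For every p ∈ [1,∞) there is a constant C_p, independent of n, such that E| S(3n) − S(T_0) − max(X_1 + 2X_2, X_2 + 2X_3, X_3 + 2X_1) |^p ≤ C_p · n^{p/3} for all n ≥ 1. -/

import Mathlib

open MeasureTheory ProbabilityTheory Real Filter
open scoped ENNReal Topology

namespace RPSGreedy

/-- Standard basis vector `e i` of `Fin 3 → ℕ`. -/
def e (i : Fin 3) : Fin 3 → ℕ := fun j => if j = i then 1 else 0

/-- One-step transition probabilities of the greedy game process. -/
noncomputable def stepProb (n : ℕ) (p q : (Fin 3 → ℕ) × ℤ) : ℝ≥0∞ :=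
  let k := (Finset.univ.filter fun i => p.1 i = n).card
  if k = 0 then
    (if (∃ i : Fin 3, q.1 = p.1 + e i) ∧ (q.2 = p.2 - 1 ∨ q.2 = p.2 ∨ q.2 = p.2 + 1)
      then 1/9 else 0)
  else if k = 1 then
    ∑ c : Fin 3, (if p.1 c = n then
      (if q.1 = p.1 + e (c+1) ∧ q.2 = p.2 + 1 then 2/9
       else if q.1 = p.1 + e (c+1) ∧ q.2 = p.2 - 1 then 1/9
       else if q.1 = p.1 + e (c+2) ∧ q.2 = p.2 then 4/9
       else if q.1 = p.1 + e (c+2) ∧ q.2 = p.2 + 1 then 2/9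
       else 0)
      else 0)
  else if k = 2 then
    (if ∃ i : Fin 3, p.1 i < n ∧ q.1 = p.1 + e i ∧ q.2 = p.2 + 1 then 1 else 0)
  else 0

/-- The greedy game process over `3n` rounds: initial state and Markov transitions. -/
def IsGreedyProcess (n : ℕ) {Ω : Type*} [MeasurableSpace Ω] (μ : Measure Ω)
    (NS : ℕ → Ω → (Fin 3 → ℕ) × ℤ) : Prop :=
  IsProbabilityMeasure μ ∧
  (∀ t, Measurable (NS t)) ∧
  μ {ω | NS 0 ω = (fun _ => 0, 0)} = 1 ∧
  (∀ t, t < 3 * n → ∀ f : ℕ → (Fin 3 → ℕ) × ℤ,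
    μ {ω | ∀ u ≤ t + 1, NS u ω = f u}
      = stepProb n (f t) (f (t + 1)) * μ {ω | ∀ u ≤ t, NS u ω = f u})

/-!
All counts equal `n` at time `3n`, so from time `T₀` to time `3n` the potential `S - N_{i+1} + N_i`
grows by `S(3n) - S(T₀) - (X_i - X_{i+1})`, and the maximum in the theorem is the largest of the
three differences `X_i - X_{i+1}`. The error is thus the smallest growth of the three potentials.
Each potential is a submartingale, and it is a martingale until `N_{i+1}` reaches `n`; for the count
that is the last to reach `n` this is the whole process. So the error is the minimum over `i` of a
martingale plus a nonnegative compensator, one of the compensators is zero, and in absolute value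
the error is at most the largest of the three martingales. Their increments are bounded, so over a
window of length `O(n^{2/3})` they are of order `n^{1/3}` in every `L^p` by the Azuma–Hoeffding
inequality.
-/

section SubGaussian

open scoped NNReal

variable {Ω : Type*} [MeasurableSpace Ω] {μ : Measure Ω} {X : Ω → ℝ} {c : ℝ≥0}

lemma hasSubgaussianMGF_iff_lintegral_exp_mul_le (hX : AEMeasurable X μ) :
    HasSubgaussianMGF X c μ ↔
      ∀ t : ℝ, ∫⁻ ω, ENNReal.ofReal (exp (t * X ω)) ∂μ ≤ ENNReal.ofReal (exp (c * t ^ 2 / 2)) := by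
  have nonneg (t : ℝ) : 0 ≤ᵐ[μ] fun ω ↦ exp (t * X ω) := ae_of_all _ fun ω ↦ (exp_pos _).le
  have mgf_le_iff {t : ℝ} (hint : Integrable (fun ω ↦ exp (t * X ω)) μ) :
      mgf X μ t ≤ exp (c * t ^ 2 / 2) ↔
        ∫⁻ ω, ENNReal.ofReal (exp (t * X ω)) ∂μ ≤ ENNReal.ofReal (exp (c * t ^ 2 / 2)) := by
    rw [← ofReal_integral_eq_lintegral_ofReal hint (nonneg t),
      ENNReal.ofReal_le_ofReal_iff (exp_pos _).le, mgf]
  refine ⟨fun h t ↦ (mgf_le_iff (h.integrable_exp_mul t)).1 (h.mgf_le t), fun h ↦ ?_⟩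
  have integrable (t : ℝ) : Integrable (fun ω ↦ exp (t * X ω)) μ :=
    (lintegral_ofReal_ne_top_iff_integrable (by fun_prop) (nonneg t)).1
      ((h t).trans_lt ENNReal.ofReal_lt_top).ne
  exact ⟨integrable, fun t ↦ (mgf_le_iff (integrable t)).2 (h t)⟩

lemma ofReal_rpow_abs_le_mul_add_exp (x : ℝ) {p t : ℝ} (hp : 0 ≤ p) (ht : 0 < t) :
    ENNReal.ofReal (|x| ^ p) ≤
      ENNReal.ofReal ((p / t) ^ p) *
        (ENNReal.ofReal (exp (t * x)) + ENNReal.ofReal (exp (-t * x))) := by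
  rw [← ENNReal.ofReal_add (exp_pos _).le (exp_pos _).le, ← ENNReal.ofReal_mul (by positivity)]
  refine ENNReal.ofReal_le_ofReal ((rpow_abs_le_mul_max_exp_of_pos x hp ht).trans ?_)
  gcongr
  exact max_le_add_of_nonneg (exp_pos _).le (exp_pos _).le

lemma lintegral_rpow_abs_le_of_hasSubgaussianMGF (h : HasSubgaussianMGF X c μ) {p : ℝ}
    (hp : 0 < p) :
    ∫⁻ ω, ENNReal.ofReal (|X ω| ^ p) ∂μ ≤
      ENNReal.ofReal (2 * exp (1 / 2) * (p ^ p * (c : ℝ) ^ (p / 2))) := by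
  obtain rfl | hc := eq_zero_or_pos c
  · have hzero : (fun ω ↦ ENNReal.ofReal (|X ω| ^ p)) =ᵐ[μ] 0 := by
      filter_upwards [h.ae_eq_zero_of_hasSubgaussianMGF_zero] with ω hω
      simp [hω, hp.ne']
    simp [lintegral_congr_ae hzero]
  set t : ℝ := (c : ℝ) ^ (-1 / 2 : ℝ) with ht
  have hc' : (0 : ℝ) < c := hc
  have ht0 : 0 < t := rpow_pos_of_pos hc' _
  have hct : c * t ^ 2 / 2 = 1 / 2 := by
    rw [ht, ← rpow_natCast, ← rpow_mul hc'.le]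
    norm_num [rpow_neg_one, hc'.ne']
  have hscale : (p / t) ^ p = p ^ p * (c : ℝ) ^ (p / 2) := by
    rw [div_eq_mul_inv, ht, ← rpow_neg hc'.le, mul_rpow hp.le (rpow_nonneg hc'.le _),
      ← rpow_mul hc'.le]
    ring_nf
  have hexp := (hasSubgaussianMGF_iff_lintegral_exp_mul_le h.aemeasurable).1 h
  have hmeas : AEMeasurable (fun ω ↦ ENNReal.ofReal (exp (t * X ω))) μ := by
    have := h.aemeasurable
    fun_prop
  calc ∫⁻ ω, ENNReal.ofReal (|X ω| ^ p) ∂μ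
      ≤ ENNReal.ofReal ((p / t) ^ p) * (∫⁻ ω, ENNReal.ofReal (exp (t * X ω)) ∂μ +
          ∫⁻ ω, ENNReal.ofReal (exp (-t * X ω)) ∂μ) := by
        rw [← lintegral_add_left' hmeas, ← lintegral_const_mul' _ _ ENNReal.ofReal_ne_top]
        exact lintegral_mono fun ω ↦ ofReal_rpow_abs_le_mul_add_exp (X ω) hp.le ht0
    _ ≤ ENNReal.ofReal ((p / t) ^ p) *
          (ENNReal.ofReal (exp (1 / 2)) + ENNReal.ofReal (exp (1 / 2))) := by
        gcongr
        · exact (hexp t).trans_eq (by rw [hct])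
        · exact (hexp (-t)).trans_eq (by rw [neg_sq, hct])
    _ = ENNReal.ofReal (2 * exp (1 / 2) * (p ^ p * (c : ℝ) ^ (p / 2))) := by
        rw [← ENNReal.ofReal_add (exp_pos _).le (exp_pos _).le,
          ← ENNReal.ofReal_mul (by positivity), hscale]
        ring_nf

end SubGaussian

section MarkovChain

open scoped NNReal

variable {β Ω : Type*} [MeasurableSpace β] [MeasurableSpace Ω]

/-- The measure on a discrete state space with mass `P x y` at `y`: the law of one step from `x`
for the transition weights `P`. The weights from a given state need not sum to one. -/
noncomputable def transitionMeasure (P : β → β → ℝ≥0∞) (x : β) : Measure β :=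
  Measure.sum fun y ↦ P x y • Measure.dirac y

/-- The path of the process `Y` up to and including time `t`. -/
def pathUpTo (Y : ℕ → Ω → β) (t : ℕ) (ω : Ω) : Fin (t + 1) → β := fun u ↦ Y u ω

/-- A process whose steps up to time `T` have the transition weights `P` given the whole past. The
initial law is arbitrary. -/
structure IsMarkovChainUpTo (P : β → β → ℝ≥0∞) (T : ℕ) (Y : ℕ → Ω → β) (μ : Measure Ω) :
    Prop where
  measurable : ∀ t, Measurable (Y t)
  measure_path_succ : ∀ t < T, ∀ f : ℕ → β,
    μ {ω | ∀ u ≤ t + 1, Y u ω = f u} = P (f t) (f (t + 1)) * μ {ω | ∀ u ≤ t, Y u ω = f u}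

/-- The expected one-step increment of the potential `h` from the state `x`. -/
noncomputable def meanIncrement (P : β → β → ℝ≥0∞) (h : β → ℝ) (x : β) : ℝ :=
  ∫ y, (h y - h x) ∂transitionMeasure P x

/-- The increment of the potential `h` from `x` to `y`, minus its expectation: the martingale
increment in the Doob decomposition of `h` along a chain. -/
noncomputable def compensatedIncrement (P : β → β → ℝ≥0∞) (h : β → ℝ) (x y : β) : ℝ :=
  h y - h x - meanIncrement P h x

lemma IsMarkovChainUpTo.measure_pathUpTo_eq_and_eq {P : β → β → ℝ≥0∞} {T t : ℕ} {Y : ℕ → Ω → β}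
    {μ : Measure Ω} (hY : IsMarkovChainUpTo P T Y μ) (ht : t < T) (x : Fin (t + 1) → β) (y : β) :
    μ {ω | pathUpTo Y t ω = x ∧ Y (t + 1) ω = y} =
      P (x (Fin.last t)) y * μ {ω | pathUpTo Y t ω = x} := by
  let f (u : ℕ) : β := if hu : u < t + 1 then x ⟨u, hu⟩ else y
  have hpath (ω : Ω) : (∀ u ≤ t, Y u ω = f u) ↔ pathUpTo Y t ω = x := by
    simp +contextual [funext_iff, Fin.forall_iff, pathUpTo, f]
  have hpath_succ (ω : Ω) : (∀ u ≤ t + 1, Y u ω = f u) ↔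
      pathUpTo Y t ω = x ∧ Y (t + 1) ω = y := by
    rw [← hpath]
    simp [Nat.le_add_one_iff, or_imp, forall_and, f]
  have hmain := hY.measure_path_succ t ht f
  simp only [hpath, hpath_succ] at hmain
  simpa [f, Fin.last] using hmain

lemma sum_Ico_compensatedIncrement (P : β → β → ℝ≥0∞) (h : β → ℝ) (f : ℕ → β) {s t : ℕ}
    (hst : s ≤ t) :
    ∑ u ∈ Finset.Ico s t, compensatedIncrement P h (f u) (f (u + 1)) =
      h (f t) - h (f s) - ∑ u ∈ Finset.Ico s t, meanIncrement P h (f u) := by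
  simp only [compensatedIncrement, Finset.sum_sub_distrib _ (meanIncrement P h <| f ·),
    Finset.sum_Ico_sub (fun u ↦ h (f u)) hst]

variable [DiscreteMeasurableSpace β] {P : β → β → ℝ≥0∞} {x : β}

lemma lintegral_transitionMeasure (φ : β → ℝ≥0∞) :
    ∫⁻ y, φ y ∂transitionMeasure P x = ∑' y, P x y * φ y := by
  simp [transitionMeasure, lintegral_sum_measure]

lemma transitionMeasure_singleton (y : β) : transitionMeasure P x {y} = P x y := by
  classical
  simp [transitionMeasure, Set.indicator_apply]

variable [Countable β]

lemma transitionMeasure_eq_sum_dirac {ι : Type*} {s : Finset ι} {w : ι → ℝ≥0∞} {y : ι → β}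
    [DecidableEq β] (h : ∀ z, P x z = ∑ k ∈ s, if z = y k then w k else 0) :
    transitionMeasure P x = ∑ k ∈ s, w k • Measure.dirac (y k) := by
  refine Measure.ext_of_singleton fun z ↦ ?_
  simp [transitionMeasure_singleton, h, Measure.finsetSum_apply, Set.indicator_apply, eq_comm]

lemma integral_sum_smul_dirac {ι : Type*} {s : Finset ι} {w : ι → ℝ≥0∞} (hw : ∀ k ∈ s, w k ≠ ∞)
    (y : ι → β) (f : β → ℝ) :
    ∫ z, f z ∂(∑ k ∈ s, w k • Measure.dirac (y k)) = ∑ k ∈ s, (w k).toReal * f (y k) := by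
  rw [integral_finsetSum_measure fun k hk ↦ (integrable_dirac (by simp)).smul_measure (hw k hk)]
  simp

lemma ae_transitionMeasure_ne_zero : ∀ᵐ y ∂transitionMeasure P x, P x y ≠ 0 := by
  rw [ae_iff_of_countable]
  exact fun y hy ↦ by rwa [transitionMeasure_singleton] at hy

lemma hasSubgaussianMGF_compensatedIncrement {h : β → ℝ} {a b : ℝ}
    (hP : transitionMeasure P x = 0 ∨ IsProbabilityMeasure (transitionMeasure P x))
    (hab : ∀ y, P x y ≠ 0 → h y - h x ∈ Set.Icc a b) :
    HasSubgaussianMGF (compensatedIncrement P h x) ((‖b - a‖₊ / 2) ^ 2)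
      (transitionMeasure P x) := by
  rcases hP with hP | hP
  · rw [hP]
    exact ⟨by simp, fun t ↦ by simpa using (exp_pos _).le⟩
  · exact hasSubgaussianMGF_of_mem_Icc (measurable_of_countable _).aemeasurable
      (ae_transitionMeasure_ne_zero.mono hab)

namespace IsMarkovChainUpTo

variable {T t : ℕ} {Y : ℕ → Ω → β} {μ : Measure Ω}

/-- The Markov property: functionals of the past multiply through the one-step expectation. -/
lemma lintegral_mul_transition (hY : IsMarkovChainUpTo P T Y μ) (ht : t < T) {G : Ω → ℝ≥0∞}
    (hG : G.FactorsThrough (pathUpTo Y t)) (φ : β → β → ℝ≥0∞) :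
    ∫⁻ ω, G ω * φ (Y t ω) (Y (t + 1) ω) ∂μ =
      ∫⁻ ω, G ω * ∫⁻ y, φ (Y t ω) y ∂transitionMeasure P (Y t ω) ∂μ := by
  obtain ⟨H, rfl⟩ : ∃ H : (Fin (t + 1) → β) → ℝ≥0∞, G = H ∘ pathUpTo Y t :=
    (Function.factorsThrough_iff _).1 hG
  have hpath : Measurable (pathUpTo Y t) := measurable_pi_lambda _ fun u ↦ hY.measurable u
  have hpair : Measurable fun ω ↦ (pathUpTo Y t ω, Y (t + 1) ω) := hpath.prodMk (hY.measurable _)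
  calc ∫⁻ ω, H (pathUpTo Y t ω) * φ (Y t ω) (Y (t + 1) ω) ∂μ
      = ∫⁻ z, H z.1 * φ (z.1 (Fin.last t)) z.2
          ∂μ.map fun ω ↦ (pathUpTo Y t ω, Y (t + 1) ω) :=
        (lintegral_map (measurable_of_countable fun z : (Fin (t + 1) → β) × β ↦
          H z.1 * φ (z.1 (Fin.last t)) z.2) hpair).symm
    _ = ∑' x, ∑' y, H x * φ (x (Fin.last t)) y *
          (P (x (Fin.last t)) y * μ {ω | pathUpTo Y t ω = x}) := by
        rw [lintegral_countable', ENNReal.tsum_prod']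
        refine tsum_congr fun x ↦ tsum_congr fun y ↦ ?_
        rw [Measure.map_apply hpair (measurableSet_singleton _),
          ← hY.measure_pathUpTo_eq_and_eq ht]
        simp [Set.preimage]
    _ = ∑' x, H x * (∫⁻ y, φ (x (Fin.last t)) y ∂transitionMeasure P (x (Fin.last t))) *
          μ.map (pathUpTo Y t) {x} := by
        refine tsum_congr fun x ↦ ?_
        rw [lintegral_transitionMeasure, Measure.map_apply hpath (measurableSet_singleton _),
          ← ENNReal.tsum_mul_left, ← ENNReal.tsum_mul_right]
        exact tsum_congr fun y ↦ by simp only [Set.preimage, Set.mem_singleton_iff]; ring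
    _ = ∫⁻ ω, H (pathUpTo Y t ω) * ∫⁻ y, φ (Y t ω) y ∂transitionMeasure P (Y t ω) ∂μ := by
        rw [← lintegral_countable', lintegral_map (measurable_of_countable _) hpath]
        rfl

lemma ae_transition_ne_zero (hY : IsMarkovChainUpTo P T Y μ) (ht : t < T) :
    ∀ᵐ ω ∂μ, P (Y t ω) (Y (t + 1) ω) ≠ 0 := by
  classical
  let φ (x y : β) : ℝ≥0∞ := if P x y = 0 then 1 else 0
  have hφ (x : β) : ∫⁻ y, φ x y ∂transitionMeasure P x = 0 := by
    simp [lintegral_transitionMeasure, φ]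
  have hmeas : Measurable fun ω ↦ φ (Y t ω) (Y (t + 1) ω) :=
    (measurable_of_countable φ.uncurry).comp ((hY.measurable t).prodMk (hY.measurable (t + 1)))
  have hzero : ∫⁻ ω, φ (Y t ω) (Y (t + 1) ω) ∂μ = 0 := by
    simpa [hφ] using hY.lintegral_mul_transition ht (G := 1) (fun _ _ _ ↦ rfl) φ
  filter_upwards [(lintegral_eq_zero_iff hmeas).1 hzero] with ω hω
  simpa [φ] using hω

lemma lintegral_mul_exp_le (hY : IsMarkovChainUpTo P T Y μ) (ht : t < T) {g : β → β → ℝ} {c : ℝ≥0}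
    (hg : ∀ x, HasSubgaussianMGF (g x) c (transitionMeasure P x)) {G : Ω → ℝ≥0∞}
    (hG : G.FactorsThrough (pathUpTo Y t)) (l : ℝ) :
    ∫⁻ ω, G ω * ENNReal.ofReal (exp (l * g (Y t ω) (Y (t + 1) ω))) ∂μ ≤
      (∫⁻ ω, G ω ∂μ) * ENNReal.ofReal (exp (c * l ^ 2 / 2)) := by
  rw [hY.lintegral_mul_transition ht hG fun x y ↦ ENNReal.ofReal (exp (l * g x y)),
    ← lintegral_mul_const' _ _ ENNReal.ofReal_ne_top]
  gcongr with ω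
  exact (hasSubgaussianMGF_iff_lintegral_exp_mul_le
    (measurable_of_countable _).aemeasurable).1 (hg (Y t ω)) l

/-- The Azuma–Hoeffding inequality for Markov chains. -/
theorem hasSubgaussianMGF_sum_Ico [IsProbabilityMeasure μ] (hY : IsMarkovChainUpTo P T Y μ)
    {g : β → β → ℝ} {c : ℝ≥0} (hg : ∀ x, HasSubgaussianMGF (g x) c (transitionMeasure P x))
    {s t : ℕ} (hst : s ≤ t) (ht : t ≤ T) :
    HasSubgaussianMGF (fun ω ↦ ∑ u ∈ Finset.Ico s t, g (Y u ω) (Y (u + 1) ω))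
      ((t - s : ℕ) * c) μ := by
  have hmeas (t : ℕ) : Measurable fun ω ↦ ∑ u ∈ Finset.Ico s t, g (Y u ω) (Y (u + 1) ω) :=
    Finset.measurable_fun_sum _ fun u _ ↦ (measurable_of_countable g.uncurry).comp
      ((hY.measurable u).prodMk (hY.measurable (u + 1)))
  induction t, hst using Nat.le_induction with
  | base => simp
  | succ t hst ih =>
    rw [hasSubgaussianMGF_iff_lintegral_exp_mul_le (hmeas _).aemeasurable] at ih ⊢
    intro l
    let G (ω : Ω) : ℝ≥0∞ :=
      ENNReal.ofReal (exp (l * ∑ u ∈ Finset.Ico s t, g (Y u ω) (Y (u + 1) ω)))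
    have hG : G.FactorsThrough (pathUpTo Y t) := by
      intro ω ω' hωω'
      have heq (u : ℕ) (hu : u ≤ t) : Y u ω = Y u ω' :=
        congrFun hωω' ⟨u, Nat.lt_succ_of_le hu⟩
      have hsum : ∑ u ∈ Finset.Ico s t, g (Y u ω) (Y (u + 1) ω) =
          ∑ u ∈ Finset.Ico s t, g (Y u ω') (Y (u + 1) ω') := by
        refine Finset.sum_congr rfl fun u hu ↦ ?_
        have hut := (Finset.mem_Ico.1 hu).2
        rw [heq u hut.le, heq (u + 1) hut]
      simp only [G, hsum]
    calc ∫⁻ ω, ENNReal.ofReal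
          (exp (l * ∑ u ∈ Finset.Ico s (t + 1), g (Y u ω) (Y (u + 1) ω))) ∂μ
        = ∫⁻ ω, G ω * ENNReal.ofReal (exp (l * g (Y t ω) (Y (t + 1) ω))) ∂μ := by
          refine lintegral_congr fun ω ↦ ?_
          rw [← ENNReal.ofReal_mul (exp_pos _).le, ← exp_add, ← mul_add,
            Finset.sum_Ico_succ_top hst]
      _ ≤ (∫⁻ ω, G ω ∂μ) * ENNReal.ofReal (exp (c * l ^ 2 / 2)) :=
          hY.lintegral_mul_exp_le ht hg hG l
      _ ≤ ENNReal.ofReal (exp ((((t - s : ℕ) * c : ℝ≥0) : ℝ) * l ^ 2 / 2)) *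
            ENNReal.ofReal (exp (c * l ^ 2 / 2)) := by
          gcongr
          exact ih (Nat.le_of_succ_le ht) l
      _ = ENNReal.ofReal (exp ((((t + 1 - s : ℕ) * c : ℝ≥0) : ℝ) * l ^ 2 / 2)) := by
          rw [← ENNReal.ofReal_mul (exp_pos _).le, ← exp_add, Nat.succ_sub hst]
          push_cast
          ring_nf

end IsMarkovChainUpTo

end MarkovChain

section StepLaw

/-- The states of the greedy game process: the vector `N` of counts and the score `S`. -/
abbrev State : Type := (Fin 3 → ℕ) × ℤ

/-- The state after a round from `p` in which the `j`-th count grows by one and the score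
changes by `δ`. -/
def move (p : State) (j : Fin 3) (δ : ℤ) : State := (p.1 + e j, p.2 + δ)

/-- The transition weights when exactly one count has reached `n`, in the order of
`oneFullMove`. -/
noncomputable def oneFullWeight : Fin 4 → ℝ≥0∞ := ![2 / 9, 1 / 9, 4 / 9, 2 / 9]

lemma oneFullWeight_ne_top (k : Fin 4) : oneFullWeight k ≠ ∞ := by
  fin_cases k <;> simp [oneFullWeight, ENNReal.div_eq_top]

/-- The transitions when `c` is the only index whose count has reached `n`: which count grows, and
how the score changes. -/
def oneFullMove (c : Fin 3) : Fin 4 → Fin 3 × ℤ :=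
  ![(c + 1, 1), (c + 1, -1), (c + 2, 0), (c + 2, 1)]

variable {n : ℕ} {p q : State}

lemma e_injective : Function.Injective e := fun i j hij ↦ by
  simpa [e] using congrFun hij i

lemma move_inj {j k : Fin 3} {δ ε : ℤ} : move p j δ = move p k ε ↔ j = k ∧ δ = ε := by
  simp [move, e_injective.eq_iff]

lemma eq_or_eq_add_one_or_eq_add_two : ∀ c j : Fin 3, j = c ∨ j = c + 1 ∨ j = c + 2 := by
  decide

lemma fin_three_cases (A : Fin 3 → Prop) :
    (∀ i, ¬A i) ∨ (∃ c, A c ∧ ¬A (c + 1) ∧ ¬A (c + 2)) ∨ (∃ c, ¬A c ∧ ∀ j ≠ c, A j) ∨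
      ∀ i, A i := by
  classical
  have hbool : ∀ a : Fin 3 → Bool,
      (∀ i, ¬a i) ∨ (∃ c, a c ∧ ¬a (c + 1) ∧ ¬a (c + 2)) ∨ (∃ c, ¬a c ∧ ∀ j ≠ c, a j) ∨
        ∀ i, a i := by
    decide
  simpa using hbool fun i ↦ decide (A i)

lemma stepProb_of_forall_ne (h : ∀ i, p.1 i ≠ n) :
    stepProb n p q =
      ∑ m ∈ Finset.univ ×ˢ ({-1, 0, 1} : Finset ℤ), if q = move p m.1 m.2 then 1 / 9 else 0 := by
  have hcard : (Finset.univ.filter fun i ↦ p.1 i = n).card = 0 := by simp [h]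
  simp only [stepProb, hcard, if_true]
  split_ifs with hq
  · obtain ⟨⟨j, hj⟩, hscore⟩ := hq
    obtain ⟨δ, hδ, rfl⟩ : ∃ δ ∈ ({-1, 0, 1} : Finset ℤ), q = move p j δ := by
      refine ⟨q.2 - p.2, ?_, Prod.ext hj (by simp [move])⟩
      simp only [Finset.mem_insert, Finset.mem_singleton]
      lia
    rw [Finset.sum_eq_single_of_mem (j, δ) (Finset.mk_mem_product (Finset.mem_univ j) hδ)]
    · simp
    · exact fun m _ hm ↦ if_neg fun heq ↦ hm (Prod.ext_iff.2 (move_inj.1 heq.symm))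
  · refine (Finset.sum_eq_zero fun m hm ↦ if_neg ?_).symm
    rintro rfl
    refine hq ⟨⟨m.1, rfl⟩, ?_⟩
    simp only [Finset.mem_product, Finset.mem_insert, Finset.mem_singleton] at hm
    simp only [move]
    lia

lemma stepProb_of_eq_of_ne_of_ne {c : Fin 3} (hc : p.1 c = n) (h₁ : p.1 (c + 1) ≠ n)
    (h₂ : p.1 (c + 2) ≠ n) :
    stepProb n p q =
      ∑ k, if q = move p (oneFullMove c k).1 (oneFullMove c k).2 then oneFullWeight k else 0 := by
  have hfilter : (Finset.univ.filter fun i ↦ p.1 i = n) = {c} := by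
    ext j
    rcases eq_or_eq_add_one_or_eq_add_two c j with rfl | rfl | rfl <;> simp [hc, h₁, h₂]
  have hmove (j : Fin 3) (δ : ℤ) : (q.1 = p.1 + e j ∧ q.2 = p.2 + δ) ↔ q = move p j δ :=
    (Prod.ext_iff (y := move p j δ)).symm
  have hmove_zero (j : Fin 3) : (q.1 = p.1 + e j ∧ q.2 = p.2) ↔ q = move p j 0 := by
    simp [← hmove]
  simp only [stepProb, hfilter, Finset.card_singleton, one_ne_zero, if_false, if_true,
    ← Finset.sum_filter, Finset.sum_singleton, sub_eq_add_neg, hmove, hmove_zero]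
  rw [Finset.sum_filter, Fin.sum_univ_four]
  simp only [oneFullMove, oneFullWeight, Matrix.cons_val]
  split_ifs <;> simp_all [move_inj]

lemma stepProb_of_ne_of_forall_eq {c : Fin 3} (hc : p.1 c ≠ n) (h : ∀ j ≠ c, p.1 j = n) :
    stepProb n p q = if p.1 c < n ∧ q = move p c 1 then 1 else 0 := by
  have hfilter : (Finset.univ.filter fun i ↦ p.1 i = n) = {c}ᶜ := by
    ext j
    obtain rfl | hj := eq_or_ne j c
    · simp [hc]
    · simp [h j hj, hj]
  have hiff : (∃ i, p.1 i < n ∧ q.1 = p.1 + e i ∧ q.2 = p.2 + 1) ↔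
      p.1 c < n ∧ q = move p c 1 := by
    refine ⟨fun ⟨i, hi, hq⟩ ↦ ?_, fun ⟨hc, hq⟩ ↦ ⟨c, hc, Prod.ext_iff.1 hq⟩⟩
    obtain rfl : i = c := by_contra fun hic ↦ hi.ne (h i hic)
    exact ⟨hi, Prod.ext_iff.2 hq⟩
  simp [stepProb, hfilter, Finset.card_compl, hiff]

lemma stepProb_of_forall_eq (h : ∀ i, p.1 i = n) : stepProb n p q = 0 := by
  simp [stepProb, h]

lemma exists_move_of_stepProb_ne_zero (h : stepProb n p q ≠ 0) :
    ∃ j δ, p.1 j ≠ n ∧ |δ| ≤ 1 ∧ q = move p j δ := by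
  rcases fin_three_cases (p.1 · = n) with hnone | ⟨c, hc, h₁, h₂⟩ | ⟨c, hc, hother⟩ | hall
  · rw [stepProb_of_forall_ne hnone] at h
    obtain ⟨⟨j, δ⟩, hm, hq⟩ := Finset.exists_ne_zero_of_sum_ne_zero h
    refine ⟨j, δ, hnone j, ?_, of_not_not fun hne ↦ hq (if_neg hne)⟩
    simp only [Finset.mem_product, Finset.mem_insert, Finset.mem_singleton] at hm
    rcases hm.2 with rfl | rfl | rfl <;> simp
  · rw [stepProb_of_eq_of_ne_of_ne hc h₁ h₂] at h
    obtain ⟨k, -, hq⟩ := Finset.exists_ne_zero_of_sum_ne_zero h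
    refine ⟨_, _, ?_, ?_, of_not_not fun hne ↦ hq (if_neg hne)⟩ <;>
      fin_cases k <;> simp [oneFullMove, h₁, h₂]
  · rw [stepProb_of_ne_of_forall_eq hc hother] at h
    exact ⟨c, 1, hc, by simp, (of_not_not fun hne ↦ h (if_neg hne)).2⟩
  · exact absurd (stepProb_of_forall_eq hall) h

lemma transitionMeasure_stepProb_cases (n : ℕ) (p : State) :
    transitionMeasure (stepProb n) p =
      ∑ m ∈ Finset.univ ×ˢ {-1, 0, 1}, (1 / 9 : ℝ≥0∞) • .dirac (move p m.1 m.2) ∨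
    (∃ c, p.1 c = n ∧ transitionMeasure (stepProb n) p =
      ∑ k, oneFullWeight k • .dirac (move p (oneFullMove c k).1 (oneFullMove c k).2)) ∨
    (∃ c, (∀ j ≠ c, p.1 j = n) ∧ transitionMeasure (stepProb n) p = .dirac (move p c 1)) ∨
    transitionMeasure (stepProb n) p = 0 := by
  have eq_zero (h : ∀ q, stepProb n p q = 0) : transitionMeasure (stepProb n) p = 0 := by
    simp [transitionMeasure, h]
  rcases fin_three_cases (p.1 · = n) with hnone | ⟨c, hc, h₁, h₂⟩ | ⟨c, hc, hother⟩ | hall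
  · exact .inl (transitionMeasure_eq_sum_dirac fun q ↦ stepProb_of_forall_ne hnone)
  · exact .inr (.inl ⟨c, hc, transitionMeasure_eq_sum_dirac fun q ↦
      stepProb_of_eq_of_ne_of_ne hc h₁ h₂⟩)
  · have hstep (q : State) := stepProb_of_ne_of_forall_eq (q := q) hc hother
    by_cases hlt : p.1 c < n
    · refine .inr (.inr (.inl ⟨c, hother, Measure.ext_of_singleton fun q ↦ ?_⟩))
      simp [transitionMeasure_singleton, hstep, hlt, Set.indicator_apply, eq_comm]
    · exact .inr (.inr (.inr (eq_zero fun q ↦ by simp [hstep, hlt])))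
  · exact .inr (.inr (.inr (eq_zero fun q ↦ stepProb_of_forall_eq hall)))

lemma transitionMeasure_stepProb_eq_zero_or_isProbabilityMeasure (n : ℕ) (p : State) :
    transitionMeasure (stepProb n) p = 0 ∨
      IsProbabilityMeasure (transitionMeasure (stepProb n) p) := by
  rcases transitionMeasure_stepProb_cases n p with h | ⟨c, -, h⟩ | ⟨c, -, h⟩ | h
  · refine .inr ⟨?_⟩
    simp [h, Measure.finsetSum_apply, ENNReal.mul_inv_cancel]
  · refine .inr ⟨?_⟩
    have hsum : ∑ k, oneFullWeight k = 1 := by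
      rw [← ENNReal.toReal_eq_one_iff, ENNReal.toReal_sum fun k _ ↦ oneFullWeight_ne_top k]
      simp only [oneFullWeight, Fin.sum_univ_four, Matrix.cons_val]
      norm_num
    simpa [h, Measure.finsetSum_apply] using hsum
  · rw [h]
    exact .inr inferInstance
  · exact .inl h

/-- The quantity `S - N_{i+1} + N_i`. Along the greedy game process it is a martingale until the
count `N_{i+1}` reaches `n`, and a submartingale throughout. -/
def potential (i : Fin 3) (p : State) : ℝ := p.2 - p.1 (i + 1) + p.1 i

lemma potential_move_sub_potential (i j : Fin 3) (p : State) (δ : ℤ) :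
    potential i (move p j δ) - potential i p =
      δ - (if i + 1 = j then 1 else 0) + if i = j then 1 else 0 := by
  simp only [potential, move, e, Pi.add_apply]
  push_cast
  ring

lemma potential_sub_mem_Icc (i : Fin 3) (h : stepProb n p q ≠ 0) :
    potential i q - potential i p ∈ Set.Icc (-2) 2 := by
  obtain ⟨j, δ, -, hδ, rfl⟩ := exists_move_of_stepProb_ne_zero h
  obtain ⟨hδ_ge, hδ_le⟩ : (-1 : ℝ) ≤ δ ∧ (δ : ℝ) ≤ 1 := by exact_mod_cast abs_le.1 hδ
  rw [potential_move_sub_potential]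
  constructor <;> split_ifs <;> linarith

lemma meanIncrement_potential_eq_zero_or_nonneg (n : ℕ) (i : Fin 3) (p : State) :
    meanIncrement (stepProb n) (potential i) p = 0 ∨
      p.1 (i + 1) = n ∧ 0 ≤ meanIncrement (stepProb n) (potential i) p := by
  rw [meanIncrement]
  rcases transitionMeasure_stepProb_cases n p with h | ⟨c, hc, h⟩ | ⟨c, hc, h⟩ | h
  · left
    rw [h, integral_sum_smul_dirac (by simp), Finset.sum_product_right]
    simp [potential_move_sub_potential, mul_add, mul_sub, Finset.sum_add_distrib]
  · rw [h, integral_sum_smul_dirac fun k _ ↦ oneFullWeight_ne_top k, Fin.sum_univ_four]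
    simp only [potential_move_sub_potential, oneFullMove, oneFullWeight, Matrix.cons_val]
    have h_two : (1 : Fin 3) + 1 = 2 := rfl
    have h₁₂ : (1 : Fin 3) ≠ 2 := by decide
    have h₂₀ : (2 : Fin 3) ≠ 0 := by decide
    rcases eq_or_eq_add_one_or_eq_add_two c i with rfl | rfl | rfl
    · left
      norm_num [h₁₂, h₂₀]
    · left
      norm_num [add_assoc, h_two, h₁₂, h₁₂.symm]
    · right
      have hwrap : c + 2 + 1 = c := by simp [add_assoc]
      norm_num [hwrap, hc, h₁₂.symm, h₂₀]
  · rw [h, integral_dirac, potential_move_sub_potential]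
    obtain rfl | hic := eq_or_ne (i + 1) c
    · simp
    · right
      refine ⟨hc _ hic, ?_⟩
      simp only [hic]
      split_ifs <;> norm_num
  · simp [h]

lemma meanIncrement_potential_nonneg (n : ℕ) (i : Fin 3) (p : State) :
    0 ≤ meanIncrement (stepProb n) (potential i) p :=
  (meanIncrement_potential_eq_zero_or_nonneg n i p).elim Eq.ge And.right

lemma meanIncrement_potential_eq_zero {i : Fin 3} (h : p.1 (i + 1) ≠ n) :
    meanIncrement (stepProb n) (potential i) p = 0 :=
  (meanIncrement_potential_eq_zero_or_nonneg n i p).resolve_right fun hfull ↦ h hfull.1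

lemma hasSubgaussianMGF_compensatedIncrement_potential (n : ℕ) (i : Fin 3) (p : State) :
    HasSubgaussianMGF (compensatedIncrement (stepProb n) (potential i) p) 4
      (transitionMeasure (stepProb n) p) := by
  convert hasSubgaussianMGF_compensatedIncrement
    (transitionMeasure_stepProb_eq_zero_or_isProbabilityMeasure n p)
    fun q ↦ potential_sub_mem_Icc i using 1
  ext
  norm_num

end StepLaw

section Path

/-- A trajectory of the greedy game process: it starts at the origin, and each of its `3n` steps has
positive probability. -/
structure IsGreedyPath (n : ℕ) (f : ℕ → State) : Prop where
  zero : f 0 = (fun _ ↦ 0, 0)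
  stepProb_ne_zero : ∀ t < 3 * n, stepProb n (f t) (f (t + 1)) ≠ 0

/-- The error in predicting the score gained after round `T` from the deviations `X` of the counts
from `T / 3` at that round. -/
noncomputable def endgameError (n T : ℕ) (f : ℕ → State) : ℝ :=
  let X (i : Fin 3) : ℝ := (f T).1 i - T / 3
  (f (3 * n)).2 - (f T).2 - max (X 0 + 2 * X 1) (max (X 1 + 2 * X 2) (X 2 + 2 * X 0))

namespace IsGreedyPath

variable {n s t : ℕ} {f : ℕ → State}

lemma exists_counts_succ_eq (hf : IsGreedyPath n f) (ht : t < 3 * n) :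
    ∃ j, (f t).1 j ≠ n ∧ (f (t + 1)).1 = (f t).1 + e j := by
  obtain ⟨j, δ, hj, -, hmove⟩ := exists_move_of_stepProb_ne_zero (hf.stepProb_ne_zero t ht)
  exact ⟨j, hj, congrArg Prod.fst hmove⟩

lemma sum_counts (hf : IsGreedyPath n f) (ht : t ≤ 3 * n) : ∑ i, (f t).1 i = t := by
  induction t with
  | zero => simp [hf.zero]
  | succ t ih =>
    obtain ⟨j, -, hsucc⟩ := hf.exists_counts_succ_eq ht
    simp [hsucc, Finset.sum_add_distrib, ih (Nat.le_of_succ_le ht), e]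

lemma counts_le (hf : IsGreedyPath n f) (ht : t ≤ 3 * n) (i : Fin 3) : (f t).1 i ≤ n := by
  induction t with
  | zero => simp [hf.zero]
  | succ t ih =>
    obtain ⟨j, hj, hsucc⟩ := hf.exists_counts_succ_eq ht
    have hi := ih (Nat.le_of_succ_le ht)
    obtain rfl | hij := eq_or_ne i j
    · simpa [hsucc, e] using hi.lt_of_ne hj
    · simpa [hsucc, e, hij] using hi

lemma counts_mono (hf : IsGreedyPath n f) (hst : s ≤ t) (ht : t ≤ 3 * n) :
    (f s).1 ≤ (f t).1 := by
  induction t, hst using Nat.le_induction with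
  | base => exact le_rfl
  | succ t _ ih =>
    obtain ⟨j, -, hsucc⟩ := hf.exists_counts_succ_eq ht
    exact (ih (Nat.le_of_succ_le ht)).trans (hsucc ▸ le_self_add)

lemma counts_final (hf : IsGreedyPath n f) (i : Fin 3) : (f (3 * n)).1 i = n := by
  have hsum : ∑ j, (f (3 * n)).1 j = ∑ _j : Fin 3, n := by simp [hf.sum_counts le_rfl]
  exact (Finset.sum_eq_sum_iff_of_le fun j _ ↦ hf.counts_le le_rfl j).1 hsum i (Finset.mem_univ i)

lemma exists_forall_counts_ne (hf : IsGreedyPath n f) : ∃ j, ∀ t < 3 * n, (f t).1 j ≠ n := by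
  obtain rfl | hn := Nat.eq_zero_or_pos n
  · simp
  obtain ⟨j, -, hj⟩ : ∃ j ∈ Finset.univ, (f (3 * n - 1)).1 j < n := by
    refine Finset.exists_lt_of_sum_lt ?_
    simp [hf.sum_counts (Nat.sub_le _ _), hn]
  exact ⟨j, fun t ht ↦ ((hf.counts_mono (by lia) (Nat.sub_le _ _) j).trans_lt hj).ne⟩

end IsGreedyPath

lemma isGreatest_range_sub_add_one {x : Fin 3 → ℝ} (hx : ∑ i, x i = 0) :
    IsGreatest (Set.range fun i ↦ x i - x (i + 1))
      (max (x 0 + 2 * x 1) (max (x 1 + 2 * x 2) (x 2 + 2 * x 0))) := by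
  rw [Fin.sum_univ_three] at hx
  rw [show x 0 + 2 * x 1 = x 1 - x 2 by linarith, show x 1 + 2 * x 2 = x 2 - x 0 by linarith,
    show x 2 + 2 * x 0 = x 0 - x 1 by linarith]
  refine ⟨max_rec' _ ⟨1, rfl⟩ (max_rec' _ ⟨2, rfl⟩ ⟨0, rfl⟩), ?_⟩
  rintro _ ⟨i, rfl⟩
  fin_cases i <;> simp

lemma exists_abs_sub_le_of_isGreatest {ι : Type*} {y A : ι → ℝ} {m : ℝ} (R : ℝ)
    (hm : IsGreatest (Set.range y) m) (hA : ∀ i, 0 ≤ A i) {j : ι} (hj : A j = 0) :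
    ∃ i, |R - m| ≤ |R - y i - A i| := by
  obtain ⟨⟨k, rfl⟩, hub⟩ := hm
  obtain hR | hR := le_total (y k) R
  · refine ⟨j, ?_⟩
    have hjk : y j ≤ y k := hub ⟨j, rfl⟩
    rw [hj, sub_zero, abs_of_nonneg (sub_nonneg.2 hR)]
    exact (sub_le_sub_left hjk R).trans (le_abs_self _)
  · refine ⟨k, ?_⟩
    have hAk := hA k
    rw [abs_of_nonpos (sub_nonpos.2 hR), abs_of_nonpos (by linarith)]
    linarith

lemma IsGreedyPath.exists_abs_endgameError_le {n T : ℕ} {f : ℕ → State} (hf : IsGreedyPath n f)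
    (hT : T ≤ 3 * n) :
    ∃ i, |endgameError n T f| ≤
      |∑ u ∈ Finset.Ico T (3 * n),
        compensatedIncrement (stepProb n) (potential i) (f u) (f (u + 1))| := by
  let X (i : Fin 3) : ℝ := (f T).1 i - T / 3
  let A (i : Fin 3) : ℝ :=
    ∑ u ∈ Finset.Ico T (3 * n), meanIncrement (stepProb n) (potential i) (f u)
  have hX : ∑ i, X i = 0 := by
    have hsum : ∑ i, ((f T).1 i : ℝ) = T := by exact_mod_cast hf.sum_counts hT
    simp only [X, Finset.sum_sub_distrib, hsum, Finset.sum_const, Finset.card_univ,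
      Fintype.card_fin, nsmul_eq_mul]
    push_cast
    ring
  have hA (i : Fin 3) : 0 ≤ A i :=
    Finset.sum_nonneg fun u _ ↦ meanIncrement_potential_nonneg n i (f u)
  obtain ⟨j, hj⟩ := hf.exists_forall_counts_ne
  have hAj : A (j - 1) = 0 := Finset.sum_eq_zero fun u hu ↦
    meanIncrement_potential_eq_zero (by simpa using hj u (Finset.mem_Ico.1 hu).2)
  obtain ⟨i, hi⟩ := exists_abs_sub_le_of_isGreatest ((f (3 * n)).2 - (f T).2 : ℝ)
    (isGreatest_range_sub_add_one hX) hA hAj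
  refine ⟨i, hi.trans_eq ?_⟩
  rw [sum_Ico_compensatedIncrement _ _ _ hT]
  simp only [potential, hf.counts_final, X, A]
  ring_nf

end Path

section Endgame

variable {n T : ℕ} {Ω : Type*} [MeasurableSpace Ω] {μ : Measure Ω} {NS : ℕ → Ω → State}

lemma IsGreedyProcess.isMarkovChainUpTo (h : IsGreedyProcess n μ NS) :
    IsMarkovChainUpTo (stepProb n) (3 * n) NS μ :=
  ⟨h.2.1, h.2.2.2⟩

lemma IsGreedyProcess.ae_isGreedyPath (h : IsGreedyProcess n μ NS) :
    ∀ᵐ ω ∂μ, IsGreedyPath n (NS · ω) := by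
  have := h.1
  have hzero : ∀ᵐ ω ∂μ, NS 0 ω = (fun _ ↦ 0, 0) :=
    (prob_compl_eq_zero_iff (h.2.1 0 (measurableSet_singleton _))).2 h.2.2.1
  have hstep : ∀ᵐ ω ∂μ, ∀ t < 3 * n, stepProb n (NS t ω) (NS (t + 1) ω) ≠ 0 :=
    ae_all_iff.2 fun t ↦ eventually_imp_distrib_left.2 fun ht ↦
      h.isMarkovChainUpTo.ae_transition_ne_zero ht
  filter_upwards [hzero, hstep] with ω h₀ h₁ using ⟨h₀, h₁⟩

theorem greedy_score_endgame_approx_general (h : IsGreedyProcess n μ NS) (hT : T ≤ 3 * n) {p : ℝ}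
    (hp : 0 < p) :
    ∫⁻ ω, ENNReal.ofReal (|endgameError n T (NS · ω)| ^ p) ∂μ ≤
      ENNReal.ofReal (6 * exp (1 / 2) * (p ^ p * ((3 * n - T : ℕ) * 4 : ℝ) ^ (p / 2))) := by
  have := h.1
  let M (i : Fin 3) (ω : Ω) : ℝ := ∑ u ∈ Finset.Ico T (3 * n),
    compensatedIncrement (stepProb n) (potential i) (NS u ω) (NS (u + 1) ω)
  have hM (i : Fin 3) : HasSubgaussianMGF (M i) ((3 * n - T : ℕ) * 4) μ :=
    h.isMarkovChainUpTo.hasSubgaussianMGF_sum_Ico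
      (hasSubgaussianMGF_compensatedIncrement_potential n i) hT le_rfl
  have hmeas (i : Fin 3) : AEMeasurable (fun ω ↦ ENNReal.ofReal (|M i ω| ^ p)) μ := by
    have := (hM i).aemeasurable
    fun_prop
  calc ∫⁻ ω, ENNReal.ofReal (|endgameError n T (NS · ω)| ^ p) ∂μ
      ≤ ∫⁻ ω, ∑ i, ENNReal.ofReal (|M i ω| ^ p) ∂μ := by
        refine lintegral_mono_ae ?_
        filter_upwards [h.ae_isGreedyPath] with ω hω
        obtain ⟨i, hi⟩ := hω.exists_abs_endgameError_le hT
        calc ENNReal.ofReal (|endgameError n T (NS · ω)| ^ p)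
            ≤ ENNReal.ofReal (|M i ω| ^ p) := by gcongr
          _ ≤ ∑ i, ENNReal.ofReal (|M i ω| ^ p) :=
            Finset.single_le_sum_of_canonicallyOrdered (f := fun i ↦ ENNReal.ofReal (|M i ω| ^ p))
              (Finset.mem_univ i)
    _ = ∑ i, ∫⁻ ω, ENNReal.ofReal (|M i ω| ^ p) ∂μ := lintegral_finsetSum' _ fun i _ ↦ hmeas i
    _ ≤ ∑ _i : Fin 3, ENNReal.ofReal
          (2 * exp (1 / 2) * (p ^ p * ((3 * n - T : ℕ) * 4 : ℝ) ^ (p / 2))) :=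
        Finset.sum_le_sum fun i _ ↦ lintegral_rpow_abs_le_of_hasSubgaussianMGF (hM i) hp
    _ = ENNReal.ofReal (6 * exp (1 / 2) * (p ^ p * ((3 * n - T : ℕ) * 4 : ℝ) ^ (p / 2))) := by
        rw [Finset.sum_const, ← ENNReal.ofReal_nsmul, Finset.card_univ, Fintype.card_fin,
          nsmul_eq_mul]
        ring_nf

lemma endgame_length_le (hn : 1 ≤ n) :
    ((3 * n - (3 * n - 3 * ⌈(n : ℝ) ^ ((2 : ℝ) / 3)⌉₊) : ℕ) : ℝ) ≤ 6 * (n : ℝ) ^ ((2 : ℝ) / 3) := by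
  have hone : (1 : ℝ) ≤ (n : ℝ) ^ ((2 : ℝ) / 3) := one_le_rpow (by exact_mod_cast hn) (by norm_num)
  calc ((3 * n - (3 * n - 3 * ⌈(n : ℝ) ^ ((2 : ℝ) / 3)⌉₊) : ℕ) : ℝ)
      ≤ 3 * ⌈(n : ℝ) ^ ((2 : ℝ) / 3)⌉₊ := by exact_mod_cast tsub_tsub_le
    _ ≤ 3 * (2 * (n : ℝ) ^ ((2 : ℝ) / 3)) := by
        gcongr
        exact Nat.ceil_le_two_mul (by linarith)
    _ = 6 * (n : ℝ) ^ ((2 : ℝ) / 3) := by ring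

end Endgame

/-- Lemma L1: with `T₀ = 3n − 3⌈n^{2/3}⌉` and `X_i = N_{T₀,i} − T₀/3`,
for every `p ∈ [1,∞)` there is a constant `C_p` independent of `n` with
`E|S(3n) − S(T₀) − max(X₁+2X₂, X₂+2X₃, X₃+2X₁)|^p ≤ C_p n^{p/3}`. -/
theorem greedy_score_endgame_approx
    (Ω : ℕ → Type*) [∀ n, MeasurableSpace (Ω n)] (μ : ∀ n, Measure (Ω n))
    (NS : ∀ n, ℕ → Ω n → (Fin 3 → ℕ) × ℤ)
    (hproc : ∀ n, 1 ≤ n → IsGreedyProcess n (μ n) (NS n))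
    (T0 : ℕ → ℕ) (hT0 : ∀ n, T0 n = 3 * n - 3 * ⌈(n : ℝ) ^ ((2 : ℝ) / 3)⌉₊)
    (X : ∀ n, Fin 3 → Ω n → ℝ)
    (hX : ∀ n i ω, X n i ω = ((NS n (T0 n) ω).1 i : ℝ) - (T0 n : ℝ) / 3) :
    ∀ p : ℝ, 1 ≤ p → ∃ C : ℝ, ∀ n : ℕ, 1 ≤ n →
      ∫⁻ ω, ENNReal.ofReal
          (|((NS n (3 * n) ω).2 : ℝ) - ((NS n (T0 n) ω).2 : ℝ)
            - max (X n 0 ω + 2 * X n 1 ω)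
                (max (X n 1 ω + 2 * X n 2 ω) (X n 2 ω + 2 * X n 0 ω))| ^ p) ∂(μ n)
        ≤ ENNReal.ofReal (C * (n : ℝ) ^ (p / 3)) := by
  intro p hp
  have hp₀ : 0 < p := one_pos.trans_le hp
  refine ⟨6 * exp (1 / 2) * (p ^ p * 24 ^ (p / 2)), fun n hn ↦ ?_⟩
  have hT : T0 n ≤ 3 * n := (hT0 n).trans_le (Nat.sub_le _ _)
  have hwindow : ((3 * n - T0 n : ℕ) : ℝ) ≤ 6 * (n : ℝ) ^ ((2 : ℝ) / 3) :=
    hT0 n ▸ endgame_length_le hn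
  simp only [hX]
  refine (greedy_score_endgame_approx_general (hproc n hn) hT hp₀).trans
    (ENNReal.ofReal_le_ofReal ?_)
  calc 6 * exp (1 / 2) * (p ^ p * ((3 * n - T0 n : ℕ) * 4 : ℝ) ^ (p / 2))
      ≤ 6 * exp (1 / 2) * (p ^ p * (6 * (n : ℝ) ^ ((2 : ℝ) / 3) * 4) ^ (p / 2)) := by gcongr
    _ = 6 * exp (1 / 2) * (p ^ p * 24 ^ (p / 2)) * (n : ℝ) ^ (p / 3) := by
        rw [show 6 * (n : ℝ) ^ ((2 : ℝ) / 3) * 4 = 24 * (n : ℝ) ^ ((2 : ℝ) / 3) by ring,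
          mul_rpow (by norm_num) (by positivity), ← rpow_mul (by positivity)]
        ring_nf

end RPSGreedy
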